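/- arXiv:2006.10624 — 2 statements merged into one kernel-verified Lean document; each statement's English description precedes it below -/
import Mathlib

section
/- Let V be a measurable space, π a finite nonnegative measure on V, κ a bounded measurable kernel from V to itself with ‖κ_V‖_∞ := sup_x κ(x,V) < ∞, θ(dx dy) := π(dx)κ(x,dy), and assume detailed balance (θ symmetric under the swap (x,y) ↦ (y,x)). Let β: [0,∞) → [0,∞) be continuous, convex, and continuously differentiable on (0,∞), with β'(0) := lim_{r↓0} β'(r) ∈ [−∞,∞); define A_β(u,v) := β'(v) − β'(u) ∈ [−∞,+∞] for (u,v) ≠ (0,0) and A_β(0,0) := 0, and B_β(u,v,w) := A_β(u,v)·w ∈ [−∞,+∞] with the convention 0·(±∞) = 0. Let u: [a,b]×V → [0,∞) be jointly measurable with u_t π-integrable for every t ∈ [a,b], and let w: [a,b]×V×V → ℝ be measurable with ∫_a^b ∬_{V×V} |w_t| dθ dt < ∞; set w♭_t(x,y) := ½(w_t(x,y) − w_t(y,x)). Assume that for π-a.e. x ∈ V the map t ↦ u_t(x) is absolutely continuous on [a,b] with (d/dt) u_t(x) = ∫_V w♭_t(y,x) κ(x,dy) for a.e. t ∈ (a,b).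 If ∫_V β(u_a) dπ < ∞ and ∫_a^b ∬_{V×V} (B_β(u_t(x),u_t(y),w♭_t(x,y)))₊ θ(dx dy) dt < ∞, then the map (t,x,y) ↦ B_β(u_t(x),u_t(y),w♭_t(x,y)) is integrable with respect to dt⊗θ (in particular a.e. finite), the map t ↦ ∫_V β(u_t) dπ is absolutely continuous on [a,b], and for all a ≤ s ≤ t ≤ b: ∫_V β(u_t) dπ − ∫_V β(u_s) dπ = ½ ∫_s^t ∬_{V×V} B_β(u_r(x),u_r(y),w♭_r(x,y)) θ(dx dy) dr. -/
open MeasureTheory ProbabilityTheory Filter Set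
open scoped ENNReal

/-- The extension of the derivative `β'` to `r = 0` by its (extended-real) limit
`β'(0) = β'0`. -/
noncomputable def derExt (β' : ℝ → ℝ) (β'0 : EReal) (r : ℝ) : EReal :=
  if r = 0 then β'0 else (β' r : EReal)

/-- `A_β(u,v) = β'(v) − β'(u) ∈ [−∞,+∞]` for `(u,v) ≠ (0,0)`, and `A_β(0,0) = 0`. -/
noncomputable def Abeta (β' : ℝ → ℝ) (β'0 : EReal) (u v : ℝ) : EReal :=
  if u = 0 ∧ v = 0 then 0 else derExt β' β'0 v - derExt β' β'0 u

/-- `B_β(u,v,w) = A_β(u,v)·w ∈ [−∞,+∞]`, with the convention `0·(±∞) = 0`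
(built into the `EReal` multiplication). -/
noncomputable def Bbeta (β' : ℝ → ℝ) (β'0 : EReal) (u v w : ℝ) : EReal :=
  Abeta β' β'0 u v * (w : EReal)

/-- The positive part of an extended real, as an element of `[0,+∞]`. -/
noncomputable def erealPos (e : EReal) : ℝ≥0∞ :=
  if e = ⊤ then ⊤ else ENNReal.ofReal e.toReal

/-- The absolute value of an extended real, as an element of `[0,+∞]`. -/
noncomputable def erealAbs (e : EReal) : ℝ≥0∞ := erealPos e + erealPos (-e)

/-!
Approximate `β` by Lipschitz `C¹` functions `β_c`, obtained by truncating `β'` to `[-c, c]` and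
integrating from the base point `1`. For `β_c` the chain rule holds along almost every trajectory
`t ↦ u_t(x)`; integrating it over `V` and using detailed balance with the antisymmetry of the flux
turns the right-hand side into `½ ∬ B_{β_c} dθ dt`. Truncation never increases the positive part of
`B_β`, and for `c ≥ |β'(1)|` the function `β_c` lies between the tangent line of `β` at `1` and `β`
itself. The tangent line bounds the entropy at time `b` from below, so the negative parts of
`B_{β_c}` are integrable uniformly in `c`, and Fatou's lemma gives the integrability of `B_β`.
Dominated convergence as `c → ∞` then passes to the limit on both sides.
-/

open scoped Topology NNReal

section ExtendedReal

theorem erealPos_eq_toENNReal (e : EReal) : erealPos e = e.toENNReal := rfl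

theorem erealPos_mono : Monotone erealPos := fun _ _ => EReal.toENNReal_le_toENNReal

theorem erealAbs_neg (e : EReal) : erealAbs (-e) = erealAbs e := by
  rw [erealAbs, erealAbs, neg_neg, add_comm]

theorem erealAbs_coe (x : ℝ) : erealAbs x = ‖x‖ₑ := by
  rw [erealAbs, ← EReal.coe_neg, erealPos_eq_toENNReal, erealPos_eq_toENNReal,
    EReal.real_coe_toENNReal, EReal.real_coe_toENNReal, Real.enorm_eq_ofReal_abs]
  rcases le_total 0 x with hx | hx
  · rw [abs_of_nonneg hx, ENNReal.ofReal_of_nonpos (neg_nonpos.2 hx), add_zero]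
  · rw [abs_of_nonpos hx, ENNReal.ofReal_of_nonpos hx, zero_add]

theorem erealAbs_top : erealAbs ⊤ = ⊤ := by
  rw [erealAbs, erealPos_eq_toENNReal, EReal.toENNReal_top, top_add]

theorem erealAbs_bot : erealAbs ⊥ = ⊤ := by
  rw [← erealAbs_neg, EReal.neg_bot, erealAbs_top]

theorem continuous_erealPos : Continuous erealPos := EReal.continuous_toENNReal

theorem continuous_erealAbs : Continuous erealAbs :=
  continuous_erealPos.add (continuous_erealPos.comp continuous_neg)

theorem toReal_erealAbs (e : EReal) : (erealAbs e).toReal = |e.toReal| := by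
  induction e with
  | bot => simp [erealAbs_bot]
  | top => simp [erealAbs_top]
  | coe x => simp [erealAbs_coe]

/-- The truncation of an extended real to the interval `[-c, c]`; it replaces the possibly infinite
derivative `β'(0)` by a real number. -/
noncomputable def truncate (c : ℝ≥0) (e : EReal) : ℝ :=
  (max ((-c : ℝ) : EReal) (min ((c : ℝ) : EReal) e)).toReal

theorem coe_truncate (c : ℝ≥0) (e : EReal) :
    (truncate c e : EReal) = max ((-c : ℝ) : EReal) (min ((c : ℝ) : EReal) e) :=
  EReal.coe_toReal
    (max_lt (EReal.coe_lt_top _) (min_lt_of_left_lt (EReal.coe_lt_top _))).ne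
    (lt_max_of_lt_left (EReal.bot_lt_coe _)).ne'

theorem truncate_coe (c : ℝ≥0) (x : ℝ) : truncate c x = max (-c : ℝ) (min (c : ℝ) x) := by
  rw [← EReal.coe_eq_coe_iff, coe_truncate, EReal.coe_strictMono.monotone.map_max,
    EReal.coe_strictMono.monotone.map_min]

theorem truncate_mono (c : ℝ≥0) : Monotone (truncate c) := fun x y hxy => by
  rw [← EReal.coe_le_coe_iff, coe_truncate, coe_truncate]
  exact max_le_max_left _ (min_le_min_left _ hxy)

theorem abs_truncate_le (c : ℝ≥0) (e : EReal) : |truncate c e| ≤ c := by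
  have hc : (-c : ℝ) ≤ c := neg_le_self c.2
  rw [abs_le, ← EReal.coe_le_coe_iff, ← EReal.coe_le_coe_iff, coe_truncate]
  exact ⟨le_max_left _ _, max_le (EReal.coe_le_coe_iff.2 hc) (min_le_left _ _)⟩

theorem abs_truncate_coe_le (c : ℝ≥0) (x : ℝ) : |truncate c x| ≤ |x| := by
  have hc : (0 : ℝ) ≤ c := c.coe_nonneg
  rw [truncate_coe]
  grind

theorem continuous_truncate (c : ℝ≥0) : Continuous (truncate c) := by
  rw [EReal.isEmbedding_coe.continuous_iff]
  simp only [Function.comp_def, coe_truncate]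
  fun_prop

theorem tendsto_coe_truncate_atTop (e : EReal) :
    Tendsto (fun c => (truncate c e : EReal)) atTop (𝓝 e) := by
  have htop : Tendsto (fun c : ℝ≥0 => (c : ℝ)) atTop atTop := NNReal.tendsto_coe_atTop.2 tendsto_id
  have hlim := (EReal.tendsto_coe_atBot.comp (tendsto_neg_atTop_atBot.comp htop)).max
    ((EReal.tendsto_coe_atTop.comp htop).min (tendsto_const_nhds (x := e)))
  simpa only [coe_truncate, top_inf_eq, bot_sup_eq] using! hlim

theorem coe_truncate_sub_truncate_le (c : ℝ≥0) {x y : EReal} (hxy : x ≤ y)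
    (hbot : x ≠ ⊥ ∨ y ≠ ⊥) (htop : x ≠ ⊤ ∨ y ≠ ⊤) :
    ((truncate c y - truncate c x : ℝ) : EReal) ≤ y - x := by
  induction x with
  | bot => simp [EReal.sub_bot (hbot.resolve_left (by simp))]
  | top => exact absurd (top_le_iff.1 hxy) (htop.resolve_left (by simp))
  | coe x =>
    induction y with
    | bot => exact absurd hxy (by simp)
    | top => simp
    | coe y =>
      rw [truncate_coe, truncate_coe, ← EReal.coe_sub, EReal.coe_le_coe_iff]
      have := EReal.coe_le_coe_iff.1 hxy
      grind

theorem erealPos_truncate_sub_mul_le (c : ℝ≥0) {x y : EReal} (w : ℝ)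
    (hbot : x ≠ ⊥ ∨ y ≠ ⊥) (htop : x ≠ ⊤ ∨ y ≠ ⊤) :
    erealPos (((truncate c y - truncate c x) * w : ℝ) : EReal) ≤ erealPos ((y - x) * w) := by
  wlog hxy : x ≤ y generalizing x y w
  · have hswap := this (-w) hbot.symm htop.symm (le_of_not_ge hxy)
    rwa [EReal.coe_neg, mul_neg, ← neg_mul, ← neg_mul_eq_mul_neg, neg_mul_eq_neg_mul, neg_sub,
      EReal.neg_sub hbot htop, add_comm, ← sub_eq_add_neg] at hswap
  rcases le_total 0 w with hw | hw
  · rw [EReal.coe_mul]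
    exact erealPos_mono (mul_le_mul_of_nonneg_right
      (coe_truncate_sub_truncate_le c hxy hbot htop) (EReal.coe_nonneg.2 hw))
  · have hnonpos : (truncate c y - truncate c x) * w ≤ 0 :=
      mul_nonpos_of_nonneg_of_nonpos (sub_nonneg.2 (truncate_mono c hxy)) hw
    rw [erealPos_eq_toENNReal, EReal.toENNReal_of_nonpos (EReal.coe_nonpos.2 hnonpos)]
    exact zero_le

theorem tendsto_truncate_sub_mul {x y : EReal} (w : ℝ)
    (hbot : x ≠ ⊥ ∨ y ≠ ⊥) (htop : x ≠ ⊤ ∨ y ≠ ⊤) :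
    Tendsto (fun c => (((truncate c y - truncate c x) * w : ℝ) : EReal)) atTop
      (𝓝 ((y - x) * w)) := by
  rcases eq_or_ne w 0 with rfl | hw
  · simp
  have hneg : Tendsto (fun c => -(truncate c x : EReal)) atTop (𝓝 (-x)) :=
    (tendsto_coe_truncate_atTop x).neg
  have hsub : Tendsto (fun c => (truncate c y : EReal) - truncate c x) atTop (𝓝 (y - x)) :=
    (EReal.continuousAt_add (p := (y, -x)) (by simpa [or_comm] using htop)
      (by simpa [or_comm] using hbot)).tendsto.comp
      ((tendsto_coe_truncate_atTop y).prodMk_nhds hneg)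
  have hw0 : (w : EReal) ≠ 0 := EReal.coe_ne_zero.2 hw
  simpa only [EReal.coe_mul, EReal.coe_sub] using
    EReal.Tendsto.mul hsub tendsto_const_nhds (.inr (EReal.coe_ne_bot w))
      (.inr (EReal.coe_ne_top w)) (.inr hw0) (.inr hw0)

end ExtendedReal

section Limits

variable {α ι : Type*} [MeasurableSpace α] {μ : Measure α} {l : Filter ι} {f : ι → α → ℝ}
  {e : α → EReal}

theorem aemeasurable_of_tendsto_coe [l.NeBot] [l.IsCountablyGenerated]
    (hf : ∀ i, AEMeasurable (f i) μ)
    (hlim : ∀ᵐ z ∂μ, Tendsto (fun i => (f i z : EReal)) l (𝓝 (e z))) : AEMeasurable e μ :=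
  aemeasurable_of_tendsto_metrizable_ae l (fun i => (hf i).coe_real_ereal) hlim

theorem lintegral_erealAbs_lt_top_of_tendsto [l.NeBot] [l.IsCountablyGenerated]
    {ℓ : α → ℝ} {M : ℝ}
    (hf : ∀ i, Integrable (f i) μ) (hℓ : Integrable ℓ μ)
    (hlower : ∀ᶠ i in l, ∀ᵐ z ∂μ, ℓ z ≤ f i z) (hupper : ∀ᶠ i in l, ∫ z, f i z ∂μ ≤ M)
    (hlim : ∀ᵐ z ∂μ, Tendsto (fun i => (f i z : EReal)) l (𝓝 (e z))) :
    ∫⁻ z, erealAbs (e z) ∂μ < ⊤ := by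
  have hbound : ∀ᶠ i in l,
      ∫⁻ z, ‖f i z‖ₑ ∂μ ≤ ENNReal.ofReal (M + ∫ z, 2 * |ℓ z| ∂μ) := by
    filter_upwards [hlower, hupper] with i hi hM
    rw [← ofReal_integral_norm_eq_lintegral_enorm (hf i)]
    have hℓabs : Integrable (fun z => 2 * |ℓ z|) μ := hℓ.abs.const_mul 2
    have hnorm : ∀ᵐ z ∂μ, ‖f i z‖ ≤ f i z + 2 * |ℓ z| := by
      filter_upwards [hi] with z hz
      rw [Real.norm_eq_abs]
      grind
    refine ENNReal.ofReal_le_ofReal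
      ((integral_mono_ae (hf i).norm ((hf i).add hℓabs) hnorm).trans ?_)
    rw [integral_add' (hf i) hℓabs]
    gcongr
  calc ∫⁻ z, erealAbs (e z) ∂μ
      = ∫⁻ z, liminf (fun i => ‖f i z‖ₑ) l ∂μ := by
        refine lintegral_congr_ae (hlim.mono fun z hz => ?_)
        simpa only [erealAbs_coe, Function.comp_def] using
          (((continuous_erealAbs.tendsto _).comp hz).liminf_eq).symm
    _ ≤ liminf (fun i => ∫⁻ z, ‖f i z‖ₑ ∂μ) l :=
        lintegral_liminf_le' fun i => (hf i).1.enorm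
    _ ≤ ENNReal.ofReal (M + ∫ z, 2 * |ℓ z| ∂μ) :=
        (liminf_le_liminf hbound).trans_eq (liminf_const _)
    _ < ⊤ := ENNReal.ofReal_lt_top

theorem integrable_toReal_of_lintegral_erealAbs_lt_top (he : AEMeasurable e μ)
    (hfin : ∫⁻ z, erealAbs (e z) ∂μ < ⊤) : Integrable (fun z => (e z).toReal) μ := by
  have habs : Integrable (fun z => (erealAbs (e z)).toReal) μ :=
    integrable_toReal_of_lintegral_ne_top (continuous_erealAbs.measurable.comp_aemeasurable he)
      hfin.ne
  refine habs.mono' he.ereal_toReal.aestronglyMeasurable (.of_forall fun z => ?_)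
  rw [toReal_erealAbs, Real.norm_eq_abs]

theorem tendsto_integral_of_tendsto_coe [l.NeBot] [l.IsCountablyGenerated]
    (hf : ∀ i, AEMeasurable (f i) μ)
    (hbound : ∀ i, ∀ᵐ z ∂μ, ‖f i z‖ₑ ≤ erealAbs (e z)) (hfin : ∫⁻ z, erealAbs (e z) ∂μ < ⊤)
    (hlim : ∀ᵐ z ∂μ, Tendsto (fun i => (f i z : EReal)) l (𝓝 (e z))) :
    Tendsto (fun i => ∫ z, f i z ∂μ) l (𝓝 (∫ z, (e z).toReal ∂μ)) := by
  have he : AEMeasurable e μ := aemeasurable_of_tendsto_coe hf hlim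
  have hfinite : ∀ᵐ z ∂μ, erealAbs (e z) < ⊤ :=
    ae_lt_top' (continuous_erealAbs.measurable.comp_aemeasurable he) hfin.ne
  refine tendsto_integral_filter_of_dominated_convergence (fun z => |(e z).toReal|)
    (.of_forall fun i => (hf i).aestronglyMeasurable) (.of_forall fun i => ?_)
    (integrable_toReal_of_lintegral_erealAbs_lt_top he hfin).abs ?_
  · filter_upwards [hbound i, hfinite] with z hz hzfin
    simpa only [toReal_enorm, toReal_erealAbs] using ENNReal.toReal_mono hzfin.ne hz
  · filter_upwards [hlim, hfinite] with z hz hzfin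
    have htop : e z ≠ ⊤ := fun h => hzfin.ne (by rw [h, erealAbs_top])
    have hbot : e z ≠ ⊥ := fun h => hzfin.ne (by rw [h, erealAbs_bot])
    simpa only [EReal.toReal_coe, Function.comp_def] using
      (EReal.tendsto_toReal htop hbot).comp hz

end Limits

section ConvexEntropy

theorem truncate_coe_mem_Icc_of_le {c : ℝ≥0} {x y : ℝ} (hx : |x| ≤ c) (hxy : x ≤ y) :
    truncate c y ∈ Icc x y := by
  rw [truncate_coe, mem_Icc]
  grind

theorem truncate_coe_mem_Icc_of_ge {c : ℝ≥0} {x y : ℝ} (hx : |x| ≤ c) (hyx : y ≤ x) :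
    truncate c y ∈ Icc y x := by
  rw [truncate_coe, mem_Icc]
  grind

theorem intervalIntegral_le_of_le_right_of_ge_left {p q : ℝ → ℝ} {m r : ℝ}
    (hp : IntervalIntegrable p volume m r) (hq : IntervalIntegrable q volume m r)
    (hright : ∀ s ∈ Ioo m r, p s ≤ q s) (hleft : ∀ s ∈ Ioo r m, q s ≤ p s) :
    ∫ s in m..r, p s ≤ ∫ s in m..r, q s := by
  rcases le_total m r with hmr | hrm
  · exact intervalIntegral.integral_mono_on_of_le_Ioo hmr hp hq hright
  · rw [intervalIntegral.integral_symm r m, intervalIntegral.integral_symm r m, neg_le_neg_iff]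
    exact intervalIntegral.integral_mono_on_of_le_Ioo hrm hq.symm hp.symm hleft

/-- The entropy densities of the chain rule: continuous convex functions `β` on `[0, ∞)` with a
continuous derivative `β'` on `(0, ∞)`, whose limit at `0` is the extended real `β'0`. -/
structure IsConvexEntropy (β β' : ℝ → ℝ) (β'0 : EReal) : Prop where
  continuousOn : ContinuousOn β (Ici 0)
  convexOn : ConvexOn ℝ (Ici 0) β
  hasDerivAt : ∀ r, 0 < r → HasDerivAt β (β' r) r
  continuousOn_deriv : ContinuousOn β' (Ioi 0)
  tendsto_deriv : Tendsto (fun r => (β' r : EReal)) (𝓝[>] 0) (𝓝 β'0)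

/-- The derivative `β'` truncated to `[-c, c]`, extended to negative arguments by its value
at `0`. -/
noncomputable def truncatedDeriv (β' : ℝ → ℝ) (β'0 : EReal) (c : ℝ≥0) (r : ℝ) : ℝ :=
  truncate c (derExt β' β'0 (max r 0))

/-- The primitive of `truncatedDeriv` that agrees with `β` at `1`: a Lipschitz `C¹`
approximation of `β`. The base point is `1` because `β'` may be infinite at `0`. -/
noncomputable def truncatedEntropy (β β' : ℝ → ℝ) (β'0 : EReal) (c : ℝ≥0) (r : ℝ) : ℝ :=
  β 1 + ∫ s in 1..r, truncatedDeriv β' β'0 c s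

theorem derExt_of_ne_zero (β' : ℝ → ℝ) (β'0 : EReal) {r : ℝ} (hr : r ≠ 0) :
    derExt β' β'0 r = β' r :=
  if_neg hr

theorem truncatedDeriv_of_nonneg (β' : ℝ → ℝ) (β'0 : EReal) (c : ℝ≥0) {r : ℝ} (hr : 0 ≤ r) :
    truncatedDeriv β' β'0 c r = truncate c (derExt β' β'0 r) := by
  rw [truncatedDeriv, max_eq_left hr]

theorem truncatedDeriv_of_pos (β' : ℝ → ℝ) (β'0 : EReal) (c : ℝ≥0) {r : ℝ} (hr : 0 < r) :
    truncatedDeriv β' β'0 c r = truncate c (β' r) := by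
  rw [truncatedDeriv_of_nonneg β' β'0 c hr.le, derExt_of_ne_zero β' β'0 hr.ne']

namespace IsConvexEntropy

variable {β β' : ℝ → ℝ} {β'0 : EReal}

theorem continuousOn_derExt (hβ : IsConvexEntropy β β' β'0) :
    ContinuousOn (derExt β' β'0) (Ici 0) := by
  have hupdate : derExt β' β'0 = Function.update (fun r => (β' r : EReal)) 0 β'0 := by
    ext r
    rw [derExt, Function.update_apply]
  rw [hupdate, continuousOn_update_iff, Ici_sdiff_left]
  exact ⟨continuous_coe_real_ereal.comp_continuousOn hβ.continuousOn_deriv,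
    fun _ => hβ.tendsto_deriv⟩

theorem continuous_truncatedDeriv (hβ : IsConvexEntropy β β' β'0) (c : ℝ≥0) :
    Continuous (truncatedDeriv β' β'0 c) :=
  (continuous_truncate c).comp <| hβ.continuousOn_derExt.comp_continuous
    (continuous_id.max continuous_const) fun r => le_max_right r 0

theorem hasDerivAt_truncatedEntropy (hβ : IsConvexEntropy β β' β'0) (c : ℝ≥0) (r : ℝ) :
    HasDerivAt (truncatedEntropy β β' β'0 c) (truncatedDeriv β' β'0 c r) r :=
  (intervalIntegral.integral_hasDerivAt_right
    ((hβ.continuous_truncatedDeriv c).intervalIntegrable _ _)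
    (hβ.continuous_truncatedDeriv c).stronglyMeasurable.stronglyMeasurableAtFilter
    (hβ.continuous_truncatedDeriv c).continuousAt).const_add _

theorem lipschitzWith_truncatedEntropy (hβ : IsConvexEntropy β β' β'0) (c : ℝ≥0) :
    LipschitzWith c (truncatedEntropy β β' β'0 c) :=
  lipschitzWith_of_nnnorm_deriv_le
    (fun r => (hβ.hasDerivAt_truncatedEntropy c r).differentiableAt) fun r => by
      rw [(hβ.hasDerivAt_truncatedEntropy c r).deriv]
      exact abs_truncate_le c _

theorem monotoneOn_deriv (hβ : IsConvexEntropy β β' β'0) : MonotoneOn β' (Ioi 0) := by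
  have hmono : MonotoneOn (deriv β) (Ioi 0) :=
    (hβ.convexOn.subset Ioi_subset_Ici_self (convex_Ioi 0)).monotoneOn_deriv
      fun r hr => (hβ.hasDerivAt r hr).differentiableAt
  exact hmono.congr fun r hr => (hβ.hasDerivAt r hr).deriv

-- `β'` is bounded above on `(0, R)` by monotonicity, so its integrability is that of the
-- nonnegative derivative of the continuous function `s ↦ β' R * s - β s`.
theorem intervalIntegrable_deriv_zero (hβ : IsConvexEntropy β β' β'0) {R : ℝ} (hR : 0 < R) :
    IntervalIntegrable β' volume 0 R := by
  have hint : IntervalIntegrable (fun s => β' R - β' s) volume 0 R := by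
    refine intervalIntegral.intervalIntegrable_deriv_of_nonneg (g := fun s => β' R * s - β s)
      ?_ (fun s hs => ?_) fun s hs => ?_
    · rw [uIcc_of_le hR.le]
      exact (continuousOn_const.mul continuousOn_id).sub
        (hβ.continuousOn.mono Icc_subset_Ici_self)
    · rw [min_eq_left hR.le] at hs
      simpa using! ((hasDerivAt_id s).const_mul (β' R)).sub (hβ.hasDerivAt s hs.1)
    · rw [min_eq_left hR.le, max_eq_right hR.le] at hs
      exact sub_nonneg.2 (hβ.monotoneOn_deriv hs.1 hR hs.2.le)
  simpa using (intervalIntegrable_const (c := β' R)).sub hint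

theorem intervalIntegrable_deriv (hβ : IsConvexEntropy β β' β'0) {r : ℝ} (hr : 0 ≤ r) :
    IntervalIntegrable β' volume 1 r :=
  (hβ.intervalIntegrable_deriv_zero one_pos).symm.trans <| by
    rcases hr.eq_or_lt with rfl | hr
    · exact .refl
    · exact hβ.intervalIntegrable_deriv_zero hr

theorem integral_deriv_eq_sub (hβ : IsConvexEntropy β β' β'0) {r : ℝ} (hr : 0 ≤ r) :
    ∫ s in 1..r, β' s = β r - β 1 := by
  have hmin : 0 ≤ min 1 r := le_min zero_le_one hr
  exact intervalIntegral.integral_eq_sub_of_hasDeriv_right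
    (hβ.continuousOn.mono fun s hs => hmin.trans hs.1)
    (fun s hs => (hβ.hasDerivAt s (hmin.trans_lt hs.1)).hasDerivWithinAt)
    (hβ.intervalIntegrable_deriv hr)

theorem truncatedDeriv_mem_Icc_of_one_le (hβ : IsConvexEntropy β β' β'0) {c : ℝ≥0}
    (hc : |β' 1| ≤ c) {s : ℝ} (hs : 1 ≤ s) : truncatedDeriv β' β'0 c s ∈ Icc (β' 1) (β' s) := by
  have hs0 : 0 < s := one_pos.trans_le hs
  rw [truncatedDeriv_of_pos β' β'0 c hs0]
  exact truncate_coe_mem_Icc_of_le hc (hβ.monotoneOn_deriv (mem_Ioi.2 one_pos) hs0 hs)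

theorem truncatedDeriv_mem_Icc_of_le_one (hβ : IsConvexEntropy β β' β'0) {c : ℝ≥0}
    (hc : |β' 1| ≤ c) {s : ℝ} (hs0 : 0 < s) (hs : s ≤ 1) :
    truncatedDeriv β' β'0 c s ∈ Icc (β' s) (β' 1) := by
  rw [truncatedDeriv_of_pos β' β'0 c hs0]
  exact truncate_coe_mem_Icc_of_ge hc (hβ.monotoneOn_deriv hs0 (mem_Ioi.2 one_pos) hs)

theorem tangent_le_truncatedEntropy (hβ : IsConvexEntropy β β' β'0) {c : ℝ≥0}
    (hc : |β' 1| ≤ c) {r : ℝ} (hr : 0 ≤ r) :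
    β 1 + β' 1 * (r - 1) ≤ truncatedEntropy β β' β'0 c r := by
  have hconst : β' 1 * (r - 1) = ∫ _ in 1..r, β' 1 := by
    rw [intervalIntegral.integral_const, smul_eq_mul, mul_comm]
  rw [truncatedEntropy, hconst]
  gcongr
  exact intervalIntegral_le_of_le_right_of_ge_left intervalIntegrable_const
    ((hβ.continuous_truncatedDeriv c).intervalIntegrable _ _)
    (fun s hs => (hβ.truncatedDeriv_mem_Icc_of_one_le hc hs.1.le).1)
    fun s hs => (hβ.truncatedDeriv_mem_Icc_of_le_one hc (hr.trans_lt hs.1) hs.2.le).2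

theorem truncatedEntropy_le (hβ : IsConvexEntropy β β' β'0) {c : ℝ≥0} (hc : |β' 1| ≤ c) {r : ℝ}
    (hr : 0 ≤ r) : truncatedEntropy β β' β'0 c r ≤ β r := by
  rw [truncatedEntropy, ← le_sub_iff_add_le', ← hβ.integral_deriv_eq_sub hr]
  exact intervalIntegral_le_of_le_right_of_ge_left
    ((hβ.continuous_truncatedDeriv c).intervalIntegrable _ _) (hβ.intervalIntegrable_deriv hr)
    (fun s hs => (hβ.truncatedDeriv_mem_Icc_of_one_le hc hs.1.le).2)
    fun s hs => (hβ.truncatedDeriv_mem_Icc_of_le_one hc (hr.trans_lt hs.1) hs.2.le).1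

theorem tendsto_truncatedEntropy (hβ : IsConvexEntropy β β' β'0) {r : ℝ} (hr : 0 ≤ r) :
    Tendsto (fun c => truncatedEntropy β β' β'0 c r) atTop (𝓝 (β r)) := by
  have hpos : ∀ s ∈ uIoc 1 r, 0 < s := fun s hs => (le_min zero_le_one hr).trans_lt hs.1
  have hlim : Tendsto (fun c => ∫ s in 1..r, truncatedDeriv β' β'0 c s) atTop
      (𝓝 (∫ s in 1..r, β' s)) := by
    refine intervalIntegral.tendsto_integral_filter_of_dominated_convergence (fun s => |β' s|)
      (.of_forall fun c => (hβ.continuous_truncatedDeriv c).aestronglyMeasurable)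
      (.of_forall fun c => .of_forall fun s hs => ?_) (hβ.intervalIntegrable_deriv hr).abs
      (.of_forall fun s hs => ?_)
    · rw [truncatedDeriv_of_pos β' β'0 c (hpos s hs)]
      exact abs_truncate_coe_le c _
    · simp only [truncatedDeriv_of_pos β' β'0 _ (hpos s hs)]
      exact EReal.tendsto_coe.1 (tendsto_coe_truncate_atTop _)
  simpa only [truncatedEntropy, hβ.integral_deriv_eq_sub hr, add_sub_cancel] using
    hlim.const_add (β 1)

end IsConvexEntropy

end ConvexEntropy

section EntropyProduction

variable (β' : ℝ → ℝ) (β'0 : EReal)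

theorem derExt_ne_or_ne {u v : ℝ} (huv : ¬(u = 0 ∧ v = 0)) {e : EReal}
    (he : ∀ x : ℝ, (x : EReal) ≠ e) : derExt β' β'0 u ≠ e ∨ derExt β' β'0 v ≠ e := by
  rcases not_and_or.1 huv with hu | hv
  · exact .inl (derExt_of_ne_zero β' β'0 hu ▸ he _)
  · exact .inr (derExt_of_ne_zero β' β'0 hv ▸ he _)

theorem Bbeta_zero_zero (w : ℝ) : Bbeta β' β'0 0 0 w = 0 := by
  rw [Bbeta, Abeta, if_pos ⟨rfl, rfl⟩, zero_mul]

theorem Bbeta_of_not_zero_zero {u v : ℝ} (huv : ¬(u = 0 ∧ v = 0)) (w : ℝ) :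
    Bbeta β' β'0 u v w = (derExt β' β'0 v - derExt β' β'0 u) * w := by
  rw [Bbeta, Abeta, if_neg huv]

theorem Bbeta_neg (u v w : ℝ) : Bbeta β' β'0 u v (-w) = -Bbeta β' β'0 u v w := by
  rw [Bbeta, Bbeta, EReal.coe_neg, mul_neg]

/-- The real-valued approximation of `Bbeta` in which the derivative is truncated to
`[-c, c]`. -/
noncomputable def truncatedBbeta (c : ℝ≥0) (u v w : ℝ) : ℝ :=
  (truncatedDeriv β' β'0 c v - truncatedDeriv β' β'0 c u) * w

theorem truncatedBbeta_zero_zero (c : ℝ≥0) (w : ℝ) : truncatedBbeta β' β'0 c 0 0 w = 0 := by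
  rw [truncatedBbeta, sub_self, zero_mul]

theorem truncatedBbeta_neg (c : ℝ≥0) (u v w : ℝ) :
    truncatedBbeta β' β'0 c u v (-w) = -truncatedBbeta β' β'0 c u v w :=
  mul_neg _ _

theorem truncatedBbeta_of_nonneg (c : ℝ≥0) {u v : ℝ} (hu : 0 ≤ u) (hv : 0 ≤ v) (w : ℝ) :
    truncatedBbeta β' β'0 c u v w
      = (truncate c (derExt β' β'0 v) - truncate c (derExt β' β'0 u)) * w := by
  rw [truncatedBbeta, truncatedDeriv_of_nonneg β' β'0 c hu, truncatedDeriv_of_nonneg β' β'0 c hv]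

variable {u v : ℝ} (w : ℝ)

theorem erealPos_truncatedBbeta_le (c : ℝ≥0) (hu : 0 ≤ u) (hv : 0 ≤ v) :
    erealPos (truncatedBbeta β' β'0 c u v w) ≤ erealPos (Bbeta β' β'0 u v w) := by
  by_cases huv : u = 0 ∧ v = 0
  · obtain ⟨rfl, rfl⟩ := huv
    rw [Bbeta_zero_zero, truncatedBbeta_zero_zero, EReal.coe_zero]
  · rw [Bbeta_of_not_zero_zero β' β'0 huv, truncatedBbeta_of_nonneg β' β'0 c hu hv]
    exact erealPos_truncate_sub_mul_le c w (derExt_ne_or_ne β' β'0 huv EReal.coe_ne_bot)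
      (derExt_ne_or_ne β' β'0 huv EReal.coe_ne_top)

theorem enorm_truncatedBbeta_le (c : ℝ≥0) (hu : 0 ≤ u) (hv : 0 ≤ v) :
    ‖truncatedBbeta β' β'0 c u v w‖ₑ ≤ erealAbs (Bbeta β' β'0 u v w) := by
  have hneg := erealPos_truncatedBbeta_le β' β'0 (-w) c hu hv
  rw [truncatedBbeta_neg, Bbeta_neg, EReal.coe_neg] at hneg
  rw [← erealAbs_coe]
  exact add_le_add (erealPos_truncatedBbeta_le β' β'0 w c hu hv) hneg

theorem tendsto_truncatedBbeta (hu : 0 ≤ u) (hv : 0 ≤ v) :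
    Tendsto (fun c => (truncatedBbeta β' β'0 c u v w : EReal)) atTop
      (𝓝 (Bbeta β' β'0 u v w)) := by
  by_cases huv : u = 0 ∧ v = 0
  · obtain ⟨rfl, rfl⟩ := huv
    simp [Bbeta_zero_zero, truncatedBbeta_zero_zero]
  · simp only [Bbeta_of_not_zero_zero β' β'0 huv, truncatedBbeta_of_nonneg β' β'0 _ hu hv]
    exact tendsto_truncate_sub_mul w (derExt_ne_or_ne β' β'0 huv EReal.coe_ne_bot)
      (derExt_ne_or_ne β' β'0 huv EReal.coe_ne_top)

end EntropyProduction

section LipschitzChainRule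

theorem absolutelyContinuousOnInterval_comp_of_lipschitzWith {X Y : Type*} [PseudoMetricSpace X]
    [PseudoMetricSpace Y] {G : X → Y} {f : ℝ → X} {a b : ℝ} {K : ℝ≥0} (hG : LipschitzWith K G)
    (hf : AbsolutelyContinuousOnInterval f a b) :
    AbsolutelyContinuousOnInterval (G ∘ f) a b := by
  unfold AbsolutelyContinuousOnInterval at *
  have hK := hf.const_mul (K : ℝ)
  rw [mul_zero] at hK
  refine squeeze_zero (fun E => Finset.sum_nonneg fun i _ => dist_nonneg) (fun E => ?_) hK
  rw [Finset.mul_sum]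
  exact Finset.sum_le_sum fun i _ => hG.dist_le_mul _ _

theorem comp_sub_comp_eq_setIntegral {G g f h : ℝ → ℝ} {K : ℝ≥0} {a b s t : ℝ}
    (hG : LipschitzWith K G) (hderiv : ∀ r, HasDerivAt G (g r) r) (hh : IntegrableOn h (Icc a b))
    (hf : ∀ t ∈ Icc a b, f t = f a + ∫ r in Icc a t, h r)
    (hs : s ∈ Icc a b) (ht : t ∈ Icc a b) (hst : s ≤ t) :
    G (f t) - G (f s) = ∫ r in Icc s t, g (f r) * h r := by
  have hab : a ≤ b := hs.1.trans hs.2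
  have hhi : IntervalIntegrable h volume a b :=
    (intervalIntegrable_iff_integrableOn_Icc_of_le hab).2 hh
  let F : ℝ → ℝ := fun t => f a + ∫ r in a..t, h r
  have hfF : ∀ t ∈ Icc a b, f t = F t := fun t ht => by
    rw [hf t ht, integral_Icc_eq_integral_Ioc, ← intervalIntegral.integral_of_le ht.1]
  have hF : AbsolutelyContinuousOnInterval F a b :=
    (LipschitzWith.const (f a)).lipschitzOnWith.absolutelyContinuousOnInterval.fun_add
      (hhi.absolutelyContinuousOnInterval_intervalIntegral left_mem_uIcc)
  have hGF : AbsolutelyContinuousOnInterval (G ∘ F) s t :=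
    (absolutelyContinuousOnInterval_comp_of_lipschitzWith hG hF).mono <| by
      rw [uIcc_of_le hst, uIcc_of_le hab]
      exact Icc_subset_Icc hs.1 ht.2
  have hderivGF : ∀ᵐ r, r ∈ Ioc s t → deriv (G ∘ F) r = g (f r) * h r := by
    filter_upwards [hhi.ae_hasDerivAt_integral] with r hr hrst
    have hrab : r ∈ Icc a b := ⟨hs.1.trans hrst.1.le, hrst.2.trans ht.2⟩
    have hFr : HasDerivAt F (h r) r :=
      (hr (by rwa [uIcc_of_le hab]) a left_mem_uIcc).const_add (f a)
    rw [hfF r hrab]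
    exact ((hderiv (F r)).comp r hFr).deriv
  rw [hfF t ht, hfF s hs, integral_Icc_eq_integral_Ioc,
    ← setIntegral_congr_ae measurableSet_Ioc hderivGF, ← intervalIntegral.integral_of_le hst]
  exact hGF.integral_deriv_eq_sub.symm

theorem integrable_comp_of_lipschitzWith {α E F : Type*} [MeasurableSpace α]
    [NormedAddCommGroup E] [NormedAddCommGroup F] {μ : Measure α} [IsFiniteMeasure μ]
    {G : E → F} {K : ℝ≥0} (hG : LipschitzWith K G) {f : α → E} (hf : Integrable f μ) :
    Integrable (fun x => G (f x)) μ := by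
  have hG0 : LipschitzWith K fun r => G r - G 0 := by
    simpa using hG.sub (LipschitzWith.const (G 0))
  have hcomp : Integrable (fun x => G (f x) - G 0) μ :=
    memLp_one_iff_integrable.1
      (hG0.comp_memLp (sub_self _) (memLp_one_iff_integrable.2 hf))
  exact (hcomp.add (integrable_const (G 0))).congr (.of_forall fun x => sub_add_cancel _ _)

end LipschitzChainRule

section ContinuityEquation

variable {V : Type*} [MeasurableSpace V] {π : Measure V} {κ : Kernel V V}

/-- The product of Lebesgue measure on the time interval `[a, b]` with the edge measure
`θ(dx dy) = π(dx) κ(x, dy)`. -/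
noncomputable abbrev edgeMeasure (π : Measure V) (κ : Kernel V V) (a b : ℝ) :
    Measure (ℝ × V × V) :=
  (volume.restrict (Icc a b)).prod (π ⊗ₘ κ)

theorem edgeMeasure_mono {a b s t : ℝ} (hs : s ∈ Icc a b) (ht : t ∈ Icc a b) :
    edgeMeasure π κ s t ≤ edgeMeasure π κ a b :=
  Measure.prod_mono (Measure.restrict_mono (Icc_subset_Icc hs.1 ht.2) le_rfl) le_rfl

theorem ae_edgeMeasure_fst_mem (a b : ℝ) : ∀ᵐ z ∂edgeMeasure π κ a b, z.1 ∈ Icc a b :=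
  Measure.quasiMeasurePreserving_fst.ae (ae_restrict_mem measurableSet_Icc)

/-- The mass per unit time that the flux `j` carries into `x` at time `t`. -/
noncomputable def netInflux (κ : Kernel V V) (j : ℝ × V × V → ℝ) (t : ℝ) (x : V) : ℝ :=
  ∫ y, j (t, y, x) ∂κ x

/-- The density `u` and the antisymmetric flux `j` solve the continuity equation
`∂ₜ uₜ(x) = netInflux κ j t x` on `[a, b]`, in integrated form. -/
structure IsContinuityEquationSolution (π : Measure V) (κ : Kernel V V) (a b : ℝ)
    (u : ℝ → V → ℝ) (j : ℝ × V × V → ℝ) : Prop where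
  measurable_density : Measurable fun q : ℝ × V => u q.1 q.2
  integrable_density : ∀ t ∈ Icc a b, Integrable (u t) π
  measurable_flux : Measurable j
  flux_swap : ∀ t x y, j (t, y, x) = -j (t, x, y)
  integrable_flux : Integrable j (edgeMeasure π κ a b)
  density_eq : ∀ᵐ x ∂π, ∀ t ∈ Icc a b, u t x = u a x + ∫ s in Icc a t, netInflux κ j s x

theorem integral_mul_integral_swap_eq [SFinite π] [IsSFiniteKernel κ]
    (hdb : (π ⊗ₘ κ).map Prod.swap = π ⊗ₘ κ) {φ : V → ℝ} {k : V × V → ℝ}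
    (hk : ∀ x y, k (y, x) = -k (x, y)) (hint : Integrable (fun p => φ p.1 * k p) (π ⊗ₘ κ)) :
    ∫ x, φ x * ∫ y, k (y, x) ∂κ x ∂π
      = 1 / 2 * ∫ p, (φ p.2 - φ p.1) * k p ∂(π ⊗ₘ κ) := by
  have hswap : MeasurePreserving Prod.swap (π ⊗ₘ κ) (π ⊗ₘ κ) := ⟨measurable_swap, hdb⟩
  have hcomp : ∀ p : V × V, φ p.swap.1 * k p.swap = -(φ p.2 * k p) := fun p => by
    rw [Prod.swap, hk, mul_neg]
  have hint' : Integrable (fun p => φ p.2 * k p) (π ⊗ₘ κ) := by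
    rw [← integrable_fun_neg_iff]
    simpa only [Function.comp_def, hcomp] using hswap.integrable_comp_of_integrable hint
  have hfst : ∫ p, φ p.1 * k p ∂(π ⊗ₘ κ) = -∫ p, φ p.2 * k p ∂(π ⊗ₘ κ) := by
    rw [← hswap.integral_comp MeasurableEquiv.prodComm.measurableEmbedding, ← integral_neg]
    exact integral_congr_ae (.of_forall hcomp)
  have hinflux : ∫ x, φ x * ∫ y, k (y, x) ∂κ x ∂π = -∫ p, φ p.1 * k p ∂(π ⊗ₘ κ) := by
    rw [Measure.integral_compProd hint, ← integral_neg]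
    refine integral_congr_ae (.of_forall fun x => ?_)
    simp only [hk x, integral_neg, integral_const_mul, mul_neg]
  simp only [sub_mul]
  rw [integral_sub hint' hint, hinflux, hfst]
  ring

namespace IsContinuityEquationSolution

variable {a b : ℝ} {u : ℝ → V → ℝ} {j : ℝ × V × V → ℝ}

theorem stronglyMeasurable_netInflux [IsSFiniteKernel κ]
    (hu : IsContinuityEquationSolution π κ a b u j) :
    StronglyMeasurable fun q : ℝ × V => netInflux κ j q.1 q.2 :=
  StronglyMeasurable.integral_kernel_prod_right' (κ := κ.comap Prod.snd measurable_snd)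
    (f := fun z : (ℝ × V) × V => j (z.1.1, z.2, z.1.2))
    (hu.measurable_flux.comp (by fun_prop)).stronglyMeasurable

theorem integrable_netInflux [SFinite π] [IsSFiniteKernel κ]
    (hu : IsContinuityEquationSolution π κ a b u j) :
    Integrable (fun q : ℝ × V => netInflux κ j q.1 q.2) ((volume.restrict (Icc a b)).prod π) := by
  have hj := hu.measurable_flux
  refine ⟨hu.stronglyMeasurable_netInflux.aestronglyMeasurable, lt_of_le_of_lt ?_
    hu.integrable_flux.2⟩
  rw [lintegral_prod _ hu.stronglyMeasurable_netInflux.measurable.enorm.aemeasurable,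
    lintegral_prod _ (by fun_prop)]
  refine lintegral_mono fun t => ?_
  rw [Measure.lintegral_compProd (by fun_prop)]
  refine lintegral_mono fun x => (enorm_integral_le_lintegral_enorm _).trans_eq ?_
  simp only [hu.flux_swap t x, enorm_neg]

theorem integrable_mul_flux (hu : IsContinuityEquationSolution π κ a b u j) {s t : ℝ}
    (hs : s ∈ Icc a b) (ht : t ∈ Icc a b) {ψ : ℝ × V × V → ℝ} (hψ : Measurable ψ) {C : ℝ}
    (hC : ∀ z, |ψ z| ≤ C) :
    Integrable (fun z => ψ z * j z) (edgeMeasure π κ s t) :=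
  (hu.integrable_flux.mono_measure (edgeMeasure_mono hs ht)).bdd_mul hψ.aestronglyMeasurable
    (.of_forall hC)

theorem integral_mul_netInflux_eq [SFinite π] [IsSFiniteKernel κ]
    (hu : IsContinuityEquationSolution π κ a b u j) (hdb : (π ⊗ₘ κ).map Prod.swap = π ⊗ₘ κ)
    {φ : ℝ → V → ℝ} (hφ : Measurable fun q : ℝ × V => φ q.1 q.2) {C : ℝ}
    (hC : ∀ t x, |φ t x| ≤ C) {s t : ℝ} (hs : s ∈ Icc a b) (ht : t ∈ Icc a b) :
    ∫ x, (∫ r in Icc s t, φ r x * netInflux κ j r x) ∂π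
      = 1 / 2 * ∫ z, (φ z.1 z.2.2 - φ z.1 z.2.1) * j z ∂edgeMeasure π κ s t := by
  have hφfst : Measurable fun z : ℝ × V × V => φ z.1 z.2.1 :=
    hφ.comp (f := fun z : ℝ × V × V => (z.1, z.2.1)) (by fun_prop)
  have hφsnd : Measurable fun z : ℝ × V × V => φ z.1 z.2.2 :=
    hφ.comp (f := fun z : ℝ × V × V => (z.1, z.2.2)) (by fun_prop)
  have hinflux : Integrable (fun q : ℝ × V => φ q.1 q.2 * netInflux κ j q.1 q.2)
      ((volume.restrict (Icc s t)).prod π) :=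
    (hu.integrable_netInflux.mono_measure (Measure.prod_mono
      (Measure.restrict_mono (Icc_subset_Icc hs.1 ht.2) le_rfl) le_rfl)).bdd_mul
      hφ.aestronglyMeasurable (.of_forall fun q => hC q.1 q.2)
  have hproduction : Integrable (fun z => (φ z.1 z.2.2 - φ z.1 z.2.1) * j z)
      (edgeMeasure π κ s t) :=
    hu.integrable_mul_flux hs ht (hφsnd.sub hφfst) fun z =>
      (abs_sub _ _).trans (add_le_add (hC z.1 z.2.2) (hC z.1 z.2.1))
  rw [integral_integral_swap (f := fun x r => φ r x * netInflux κ j r x) hinflux.swap,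
    integral_prod _ hproduction, ← integral_const_mul]
  refine integral_congr_ae ?_
  filter_upwards [(hu.integrable_mul_flux hs ht hφfst fun z => hC _ _).prod_right_ae] with r hr
  exact integral_mul_integral_swap_eq hdb (hu.flux_swap r) hr

theorem integral_comp_sub_integral_comp [IsFiniteMeasure π] [IsSFiniteKernel κ]
    (hu : IsContinuityEquationSolution π κ a b u j) (hdb : (π ⊗ₘ κ).map Prod.swap = π ⊗ₘ κ)
    {G g : ℝ → ℝ} {K : ℝ≥0} (hG : LipschitzWith K G) (hderiv : ∀ r, HasDerivAt G (g r) r)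
    {s t : ℝ} (hs : s ∈ Icc a b) (ht : t ∈ Icc a b) (hst : s ≤ t) :
    ∫ x, G (u t x) ∂π - ∫ x, G (u s x) ∂π
      = 1 / 2 * ∫ z, (g (u z.1 z.2.2) - g (u z.1 z.2.1)) * j z ∂edgeMeasure π κ s t := by
  have hg : Measurable g := by
    rw [← show deriv G = g from funext fun r => (hderiv r).deriv]
    exact measurable_deriv G
  have hpointwise : ∀ᵐ x ∂π, G (u t x) - G (u s x)
      = ∫ r in Icc s t, g (u r x) * netInflux κ j r x := by
    filter_upwards [hu.integrable_netInflux.prod_left_ae, hu.density_eq] with x hint heq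
    exact comp_sub_comp_eq_setIntegral (f := fun t => u t x) hG hderiv hint heq hs ht hst
  rw [← integral_sub (integrable_comp_of_lipschitzWith hG (hu.integrable_density t ht))
      (integrable_comp_of_lipschitzWith hG (hu.integrable_density s hs)),
    integral_congr_ae hpointwise]
  exact hu.integral_mul_netInflux_eq hdb (φ := fun r x => g (u r x))
    (hg.comp hu.measurable_density) (fun r x => (hderiv _).le_of_lipschitz hG) hs ht

end IsContinuityEquationSolution

end ContinuityEquation

section ChainRule

variable {V : Type*} [MeasurableSpace V] {π : Measure V} {κ : Kernel V V}
  {β β' : ℝ → ℝ} {β'0 : EReal} {a b s t : ℝ} {u : ℝ → V → ℝ}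
  {j : ℝ × V × V → ℝ}

/-- The entropy production `B_β(u_t(x), u_t(y), j_t(x, y))` at `(t, x, y)`. -/
noncomputable def entropyProduction (β' : ℝ → ℝ) (β'0 : EReal) (u : ℝ → V → ℝ)
    (j : ℝ × V × V → ℝ) (z : ℝ × V × V) : EReal :=
  Bbeta β' β'0 (u z.1 z.2.1) (u z.1 z.2.2) (j z)

/-- The production of the truncated entropy `truncatedEntropy β β' β'0 c` at `(t, x, y)`. -/
noncomputable def truncatedProduction (β' : ℝ → ℝ) (β'0 : EReal) (u : ℝ → V → ℝ)
    (j : ℝ × V × V → ℝ) (c : ℝ≥0) (z : ℝ × V × V) : ℝ :=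
  truncatedBbeta β' β'0 c (u z.1 z.2.1) (u z.1 z.2.2) (j z)

theorem ae_erealPos_truncatedProduction_le (hunonneg : ∀ t ∈ Icc a b, ∀ x, 0 ≤ u t x) (c : ℝ≥0) :
    ∀ᵐ z ∂edgeMeasure π κ a b, erealPos (truncatedProduction β' β'0 u j c z)
      ≤ erealPos (entropyProduction β' β'0 u j z) := by
  filter_upwards [ae_edgeMeasure_fst_mem a b] with z hz
  exact erealPos_truncatedBbeta_le β' β'0 _ c (hunonneg _ hz _) (hunonneg _ hz _)

theorem ae_enorm_truncatedProduction_le (hunonneg : ∀ t ∈ Icc a b, ∀ x, 0 ≤ u t x) (c : ℝ≥0) :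
    ∀ᵐ z ∂edgeMeasure π κ a b, ‖truncatedProduction β' β'0 u j c z‖ₑ
      ≤ erealAbs (entropyProduction β' β'0 u j z) := by
  filter_upwards [ae_edgeMeasure_fst_mem a b] with z hz
  exact enorm_truncatedBbeta_le β' β'0 _ c (hunonneg _ hz _) (hunonneg _ hz _)

theorem ae_tendsto_truncatedProduction (hunonneg : ∀ t ∈ Icc a b, ∀ x, 0 ≤ u t x) :
    ∀ᵐ z ∂edgeMeasure π κ a b, Tendsto (fun c => (truncatedProduction β' β'0 u j c z : EReal))
      atTop (𝓝 (entropyProduction β' β'0 u j z)) := by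
  filter_upwards [ae_edgeMeasure_fst_mem a b] with z hz
  exact tendsto_truncatedBbeta β' β'0 _ (hunonneg _ hz _) (hunonneg _ hz _)

namespace IsContinuityEquationSolution

theorem integrable_truncatedProduction (hu : IsContinuityEquationSolution π κ a b u j)
    (hβ : IsConvexEntropy β β' β'0) (hs : s ∈ Icc a b) (ht : t ∈ Icc a b) (c : ℝ≥0) :
    Integrable (truncatedProduction β' β'0 u j c) (edgeMeasure π κ s t) := by
  have hmeas : Measurable fun q : ℝ × V => truncatedDeriv β' β'0 c (u q.1 q.2) :=
    (hβ.continuous_truncatedDeriv c).measurable.comp hu.measurable_density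
  refine hu.integrable_mul_flux hs ht (C := c + c)
    ((hmeas.comp (f := fun z : ℝ × V × V => (z.1, z.2.2)) (by fun_prop)).sub
      (hmeas.comp (f := fun z : ℝ × V × V => (z.1, z.2.1)) (by fun_prop))) fun z => ?_
  exact (abs_sub _ _).trans (add_le_add (abs_truncate_le c _) (abs_truncate_le c _))

theorem aemeasurable_entropyProduction (hu : IsContinuityEquationSolution π κ a b u j)
    (hβ : IsConvexEntropy β β' β'0) (hunonneg : ∀ t ∈ Icc a b, ∀ x, 0 ≤ u t x) (hab : a ≤ b) :
    AEMeasurable (entropyProduction β' β'0 u j) (edgeMeasure π κ a b) :=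
  aemeasurable_of_tendsto_coe (fun c => (hu.integrable_truncatedProduction hβ
    (left_mem_Icc.2 hab) (right_mem_Icc.2 hab) c).aemeasurable)
    (ae_tendsto_truncatedProduction hunonneg)

theorem tendsto_integral_truncatedProduction (hu : IsContinuityEquationSolution π κ a b u j)
    (hβ : IsConvexEntropy β β' β'0) (hunonneg : ∀ t ∈ Icc a b, ∀ x, 0 ≤ u t x)
    (hfin : ∫⁻ z, erealAbs (entropyProduction β' β'0 u j z) ∂edgeMeasure π κ a b < ⊤)
    (hs : s ∈ Icc a b) (ht : t ∈ Icc a b) :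
    Tendsto (fun c => ∫ z, truncatedProduction β' β'0 u j c z ∂edgeMeasure π κ s t) atTop
      (𝓝 (∫ z, (entropyProduction β' β'0 u j z).toReal ∂edgeMeasure π κ s t)) := by
  have hle : edgeMeasure π κ s t ≤ edgeMeasure π κ a b := edgeMeasure_mono hs ht
  exact tendsto_integral_of_tendsto_coe
    (fun c => (hu.integrable_truncatedProduction hβ hs ht c).aemeasurable)
    (fun c => ae_mono hle (ae_enorm_truncatedProduction_le hunonneg c))
    ((lintegral_mono' hle le_rfl).trans_lt hfin)
    (ae_mono hle (ae_tendsto_truncatedProduction hunonneg))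

variable [IsFiniteMeasure π]

theorem integrable_truncatedEntropy (hu : IsContinuityEquationSolution π κ a b u j)
    (hβ : IsConvexEntropy β β' β'0) (ht : t ∈ Icc a b) (c : ℝ≥0) :
    Integrable (fun x => truncatedEntropy β β' β'0 c (u t x)) π :=
  integrable_comp_of_lipschitzWith (hβ.lipschitzWith_truncatedEntropy c)
    (hu.integrable_density t ht)

theorem integrable_tangent (hu : IsContinuityEquationSolution π κ a b u j) (ht : t ∈ Icc a b)
    (p q : ℝ) : Integrable (fun x => p + q * (u t x - 1)) π :=
  (integrable_const p).add
    (((hu.integrable_density t ht).sub (integrable_const 1)).const_mul q)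

theorem integral_truncatedEntropy_le (hu : IsContinuityEquationSolution π κ a b u j)
    (hβ : IsConvexEntropy β β' β'0) (hunonneg : ∀ t ∈ Icc a b, ∀ x, 0 ≤ u t x) (ht : t ∈ Icc a b)
    (hβut : Integrable (fun x => β (u t x)) π) {c : ℝ≥0} (hc : |β' 1| ≤ c) :
    ∫ x, truncatedEntropy β β' β'0 c (u t x) ∂π ≤ ∫ x, β (u t x) ∂π :=
  integral_mono (hu.integrable_truncatedEntropy hβ ht c) hβut
    fun x => hβ.truncatedEntropy_le hc (hunonneg t ht x)

theorem tendsto_integral_truncatedEntropy (hu : IsContinuityEquationSolution π κ a b u j)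
    (hβ : IsConvexEntropy β β' β'0) (hunonneg : ∀ t ∈ Icc a b, ∀ x, 0 ≤ u t x)
    (ht : t ∈ Icc a b) (hβut : Integrable (fun x => β (u t x)) π) :
    Tendsto (fun c => ∫ x, truncatedEntropy β β' β'0 c (u t x) ∂π) atTop
      (𝓝 (∫ x, β (u t x) ∂π)) := by
  refine tendsto_integral_filter_of_dominated_convergence
    (fun x => |β 1 + β' 1 * (u t x - 1)| + |β (u t x)|)
    (.of_forall fun c => (hu.integrable_truncatedEntropy hβ ht c).1) ?_
    ((hu.integrable_tangent ht _ _).abs.add hβut.abs)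
    (.of_forall fun x => hβ.tendsto_truncatedEntropy (hunonneg t ht x))
  filter_upwards [eventually_ge_atTop ‖β' 1‖₊] with c hc
  refine .of_forall fun x => ?_
  have hlower := hβ.tangent_le_truncatedEntropy (NNReal.coe_le_coe.2 hc) (hunonneg t ht x)
  have hupper := hβ.truncatedEntropy_le (NNReal.coe_le_coe.2 hc) (hunonneg t ht x)
  rw [Real.norm_eq_abs]
  grind

variable [IsSFiniteKernel κ]

theorem integral_truncatedEntropy_sub (hu : IsContinuityEquationSolution π κ a b u j)
    (hβ : IsConvexEntropy β β' β'0) (hdb : (π ⊗ₘ κ).map Prod.swap = π ⊗ₘ κ)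
    (hs : s ∈ Icc a b) (ht : t ∈ Icc a b) (hst : s ≤ t) (c : ℝ≥0) :
    ∫ x, truncatedEntropy β β' β'0 c (u t x) ∂π - ∫ x, truncatedEntropy β β' β'0 c (u s x) ∂π
      = 1 / 2 * ∫ z, truncatedProduction β' β'0 u j c z ∂edgeMeasure π κ s t :=
  hu.integral_comp_sub_integral_comp hdb (hβ.lipschitzWith_truncatedEntropy c)
    (hβ.hasDerivAt_truncatedEntropy c) hs ht hst
-- The tangent line at `1` bounds the truncated entropy from below at the final time, so the
-- truncated production cannot be too negative.
theorem integral_neg_truncatedProduction_le (hu : IsContinuityEquationSolution π κ a b u j)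
    (hβ : IsConvexEntropy β β' β'0) (hdb : (π ⊗ₘ κ).map Prod.swap = π ⊗ₘ κ)
    (hunonneg : ∀ t ∈ Icc a b, ∀ x, 0 ≤ u t x) (hab : a ≤ b)
    (hβua : Integrable (fun x => β (u a x)) π) {c : ℝ≥0} (hc : |β' 1| ≤ c) :
    ∫ z, -truncatedProduction β' β'0 u j c z ∂edgeMeasure π κ a b
      ≤ 2 * (∫ x, β (u a x) ∂π - ∫ x, (β 1 + β' 1 * (u b x - 1)) ∂π) := by
  have ha : a ∈ Icc a b := left_mem_Icc.2 hab
  have hb : b ∈ Icc a b := right_mem_Icc.2 hab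
  have hchain := hu.integral_truncatedEntropy_sub hβ hdb ha hb hab c
  have hinitial := hu.integral_truncatedEntropy_le hβ hunonneg ha hβua hc
  have hfinal : ∫ x, (β 1 + β' 1 * (u b x - 1)) ∂π
      ≤ ∫ x, truncatedEntropy β β' β'0 c (u b x) ∂π :=
    integral_mono (hu.integrable_tangent hb _ _) (hu.integrable_truncatedEntropy hβ hb c)
      fun x => hβ.tangent_le_truncatedEntropy hc (hunonneg b hb x)
  rw [integral_neg]
  linarith

theorem lintegral_erealAbs_entropyProduction_lt_top
    (hu : IsContinuityEquationSolution π κ a b u j)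
    (hβ : IsConvexEntropy β β' β'0) (hdb : (π ⊗ₘ κ).map Prod.swap = π ⊗ₘ κ)
    (hunonneg : ∀ t ∈ Icc a b, ∀ x, 0 ≤ u t x) (hab : a ≤ b)
    (hβua : Integrable (fun x => β (u a x)) π)
    (hpos : ∫⁻ z, erealPos (entropyProduction β' β'0 u j z) ∂edgeMeasure π κ a b < ⊤) :
    ∫⁻ z, erealAbs (entropyProduction β' β'0 u j z) ∂edgeMeasure π κ a b < ⊤ := by
  have hmeas : AEMeasurable (fun z => erealPos (entropyProduction β' β'0 u j z))
      (edgeMeasure π κ a b) := continuous_erealPos.measurable.comp_aemeasurable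
    (hu.aemeasurable_entropyProduction hβ hunonneg hab)
  have hlower (c : ℝ≥0) : ∀ᵐ z ∂edgeMeasure π κ a b,
      -(erealPos (entropyProduction β' β'0 u j z)).toReal
        ≤ -truncatedProduction β' β'0 u j c z := by
    filter_upwards [ae_erealPos_truncatedProduction_le hunonneg c, ae_lt_top' hmeas hpos.ne]
      with z hle hfin
    rw [erealPos_eq_toENNReal, EReal.real_coe_toENNReal] at hle
    exact neg_le_neg ((ENNReal.ofReal_le_iff_le_toReal hfin.ne).1 hle)
  simp only [← erealAbs_neg (entropyProduction β' β'0 u j _)]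
  refine lintegral_erealAbs_lt_top_of_tendsto (l := atTop)
    (fun c => (hu.integrable_truncatedProduction hβ
      (left_mem_Icc.2 hab) (right_mem_Icc.2 hab) c).neg)
    (integrable_toReal_of_lintegral_ne_top hmeas hpos.ne).neg (.of_forall hlower)
    ((eventually_ge_atTop ‖β' 1‖₊).mono fun c hc =>
      hu.integral_neg_truncatedProduction_le hβ hdb hunonneg hab hβua (NNReal.coe_le_coe.2 hc)) ?_
  filter_upwards [ae_tendsto_truncatedProduction hunonneg] with z hz
  exact hz.neg

theorem integrable_entropy (hu : IsContinuityEquationSolution π κ a b u j)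
    (hβ : IsConvexEntropy β β' β'0) (hdb : (π ⊗ₘ κ).map Prod.swap = π ⊗ₘ κ)
    (hunonneg : ∀ t ∈ Icc a b, ∀ x, 0 ≤ u t x)
    (hβua : Integrable (fun x => β (u a x)) π)
    (hfin : ∫⁻ z, erealAbs (entropyProduction β' β'0 u j z) ∂edgeMeasure π κ a b < ⊤)
    (ht : t ∈ Icc a b) : Integrable (fun x => β (u t x)) π := by
  have ha : a ∈ Icc a b := left_mem_Icc.2 (ht.1.trans ht.2)
  have hlim : ∀ᵐ x ∂π, Tendsto (fun c => (truncatedEntropy β β' β'0 c (u t x) : EReal)) atTop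
      (𝓝 (β (u t x))) :=
    .of_forall fun x => EReal.tendsto_coe.2 (hβ.tendsto_truncatedEntropy (hunonneg t ht x))
  have hmeas : AEMeasurable (fun x => (β (u t x) : EReal)) π :=
    aemeasurable_of_tendsto_coe (fun c => (hu.integrable_truncatedEntropy hβ ht c).aemeasurable)
      hlim
  refine integrable_toReal_of_lintegral_erealAbs_lt_top hmeas ?_
  refine lintegral_erealAbs_lt_top_of_tendsto (l := atTop)
    (fun c => hu.integrable_truncatedEntropy hβ ht c)
    (hu.integrable_tangent ht (β 1) (β' 1)) ?_ ?_ hlim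
    (M := ∫ x, β (u a x) ∂π
      + 1 / 2 * (∫ z, (entropyProduction β' β'0 u j z).toReal ∂edgeMeasure π κ a t + 1))
  · filter_upwards [eventually_ge_atTop ‖β' 1‖₊] with c hc
    exact .of_forall fun x =>
      hβ.tangent_le_truncatedEntropy (NNReal.coe_le_coe.2 hc) (hunonneg t ht x)
  · filter_upwards [eventually_ge_atTop ‖β' 1‖₊,
      (hu.tendsto_integral_truncatedProduction hβ hunonneg hfin ha ht).eventually_le_const
        (lt_add_one _)] with c hc hproduction
    have hchain := hu.integral_truncatedEntropy_sub hβ hdb ha ht ht.1 c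
    have hinitial := hu.integral_truncatedEntropy_le hβ hunonneg ha hβua (NNReal.coe_le_coe.2 hc)
    linarith

theorem integral_entropy_sub (hu : IsContinuityEquationSolution π κ a b u j)
    (hβ : IsConvexEntropy β β' β'0) (hdb : (π ⊗ₘ κ).map Prod.swap = π ⊗ₘ κ)
    (hunonneg : ∀ t ∈ Icc a b, ∀ x, 0 ≤ u t x)
    (hβua : Integrable (fun x => β (u a x)) π)
    (hfin : ∫⁻ z, erealAbs (entropyProduction β' β'0 u j z) ∂edgeMeasure π κ a b < ⊤)
    (hs : s ∈ Icc a b) (ht : t ∈ Icc a b) (hst : s ≤ t) :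
    ∫ x, β (u t x) ∂π - ∫ x, β (u s x) ∂π
      = 1 / 2 * ∫ z, (entropyProduction β' β'0 u j z).toReal ∂edgeMeasure π κ s t := by
  have hentropy {r : ℝ} (hr : r ∈ Icc a b) :=
    hu.tendsto_integral_truncatedEntropy hβ hunonneg hr
      (hu.integrable_entropy hβ hdb hunonneg hβua hfin hr)
  refine tendsto_nhds_unique ((hentropy ht).sub (hentropy hs)) ?_
  simp only [hu.integral_truncatedEntropy_sub hβ hdb hs ht hst]
  exact (hu.tendsto_integral_truncatedProduction hβ hunonneg hfin hs ht).const_mul _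

end IsContinuityEquationSolution

end ChainRule

section Antisymmetrization

variable {V : Type*} [MeasurableSpace V] {π : Measure V} {κ : Kernel V V} {a b : ℝ}
  {u : ℝ → V → ℝ} {w : ℝ → V → V → ℝ}

/-- The antisymmetric part `w♭` of a time-dependent function on edges. -/
noncomputable def antisymmetrization (w : ℝ → V → V → ℝ) (z : ℝ × V × V) : ℝ :=
  (w z.1 z.2.1 z.2.2 - w z.1 z.2.2 z.2.1) / 2

theorem integrable_antisymmetrization (hdb : (π ⊗ₘ κ).map Prod.swap = π ⊗ₘ κ)
    (hw : Integrable (fun z : ℝ × V × V => w z.1 z.2.1 z.2.2) (edgeMeasure π κ a b)) :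
    Integrable (antisymmetrization w) (edgeMeasure π κ a b) := by
  have hswap : MeasurePreserving (Prod.map id Prod.swap) (edgeMeasure π κ a b)
      (edgeMeasure π κ a b) :=
    (MeasurePreserving.id _).prod ⟨measurable_swap, hdb⟩
  exact (hw.sub (hswap.integrable_comp_of_integrable hw)).div_const 2

theorem isContinuityEquationSolution_antisymmetrization
    (hdb : (π ⊗ₘ κ).map Prod.swap = π ⊗ₘ κ)
    (humeas : Measurable fun p : ℝ × V => u p.1 p.2)
    (huint : ∀ t ∈ Icc a b, Integrable (u t) π)
    (hwmeas : Measurable fun p : ℝ × V × V => w p.1 p.2.1 p.2.2)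
    (hwint : ∫⁻ t in Icc a b, ∫⁻ p : V × V, ENNReal.ofReal |w t p.1 p.2| ∂(π ⊗ₘ κ) < ⊤)
    (hce : ∀ᵐ x ∂π, ∀ t ∈ Icc a b,
      u t x = u a x + ∫ s in Icc a t, ∫ y, (w s y x - w s x y) / 2 ∂(κ x)) :
    IsContinuityEquationSolution π κ a b u (antisymmetrization w) where
  measurable_density := humeas
  integrable_density := huint
  measurable_flux :=
    (hwmeas.sub (hwmeas.comp (f := fun z : ℝ × V × V => (z.1, z.2.2, z.2.1))
      (by fun_prop))).div_const 2
  flux_swap t x y := by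
    simp only [antisymmetrization]
    ring
  integrable_flux := by
    refine integrable_antisymmetrization hdb ⟨hwmeas.aestronglyMeasurable, ?_⟩
    exact (lintegral_prod _ hwmeas.enorm.aemeasurable).trans_lt
      (by simpa only [Real.enorm_eq_ofReal_abs] using hwint)
  density_eq := hce

end Antisymmetrization

theorem chain_rule_I_general
    {V : Type*} [MeasurableSpace V]
    (π : Measure V) [IsFiniteMeasure π]
    (κ : Kernel V V) [IsSFiniteKernel κ]
    (hdb : (π ⊗ₘ κ).map Prod.swap = π ⊗ₘ κ)
    (β β' : ℝ → ℝ) (β'0 : EReal)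
    (hβcont : ContinuousOn β (Ici 0))
    (hβconv : ConvexOn ℝ (Ici 0) β)
    (hβderiv : ∀ r : ℝ, 0 < r → HasDerivAt β (β' r) r)
    (hβ'cont : ContinuousOn β' (Ioi 0))
    (hβ'lim : Tendsto (fun r : ℝ => (β' r : EReal)) (nhdsWithin 0 (Ioi 0))
      (nhds β'0))
    (a b : ℝ) (hab : a ≤ b)
    (u : ℝ → V → ℝ)
    (humeas : Measurable fun p : ℝ × V => u p.1 p.2)
    (hunonneg : ∀ t ∈ Icc a b, ∀ x : V, 0 ≤ u t x)
    (huint : ∀ t ∈ Icc a b, Integrable (u t) π)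
    (w : ℝ → V → V → ℝ)
    (hwmeas : Measurable fun p : ℝ × V × V => w p.1 p.2.1 p.2.2)
    (hwint : ∫⁻ t in Icc a b,
      ∫⁻ p : V × V, ENNReal.ofReal |w t p.1 p.2| ∂(π ⊗ₘ κ) < ⊤)
    (hce : ∀ᵐ x ∂π, ∀ t ∈ Icc a b,
      u t x = u a x + ∫ s in Icc a t, ∫ y, (w s y x - w s x y) / 2 ∂(κ x))
    (hβua : Integrable (fun x => β (u a x)) π)
    (hBpos : ∫⁻ t in Icc a b, ∫⁻ p : V × V,
        erealPos (Bbeta β' β'0 (u t p.1) (u t p.2)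
          ((w t p.1 p.2 - w t p.2 p.1) / 2)) ∂(π ⊗ₘ κ) < ⊤) :
    (∫⁻ t in Icc a b, ∫⁻ p : V × V,
        erealAbs (Bbeta β' β'0 (u t p.1) (u t p.2)
          ((w t p.1 p.2 - w t p.2 p.1) / 2)) ∂(π ⊗ₘ κ) < ⊤) ∧
    IntegrableOn (fun t => ∫ p : V × V,
        (Bbeta β' β'0 (u t p.1) (u t p.2)
          ((w t p.1 p.2 - w t p.2 p.1) / 2)).toReal ∂(π ⊗ₘ κ)) (Icc a b) ∧
    (∀ s ∈ Icc a b, ∀ t ∈ Icc a b, s ≤ t →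
      (∫ x, β (u t x) ∂π) - (∫ x, β (u s x) ∂π)
        = (1 / 2) * ∫ r in Icc s t, ∫ p : V × V,
            (Bbeta β' β'0 (u r p.1) (u r p.2)
              ((w r p.1 p.2 - w r p.2 p.1) / 2)).toReal ∂(π ⊗ₘ κ)) := by
  have hβ : IsConvexEntropy β β' β'0 := ⟨hβcont, hβconv, hβderiv, hβ'cont, hβ'lim⟩
  have hu : IsContinuityEquationSolution π κ a b u (antisymmetrization w) :=
    isContinuityEquationSolution_antisymmetrization hdb humeas huint hwmeas hwint hce
  have hmeas := hu.aemeasurable_entropyProduction hβ hunonneg hab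
  have hfin := hu.lintegral_erealAbs_entropyProduction_lt_top hβ hdb hunonneg hab hβua <|
    (lintegral_prod _ (continuous_erealPos.measurable.comp_aemeasurable hmeas)).trans_lt hBpos
  have hint := integrable_toReal_of_lintegral_erealAbs_lt_top hmeas hfin
  refine ⟨?_, hint.integral_prod_left, fun s hs t ht hst => ?_⟩
  · exact (lintegral_prod _ (continuous_erealAbs.measurable.comp_aemeasurable hmeas)).symm.trans_lt
      hfin
  · rw [hu.integral_entropy_sub hβ hdb hunonneg hβua hfin hs ht hst,
      integral_prod _ (hint.mono_measure (edgeMeasure_mono hs ht))]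
    rfl

/-- Chain rule I: along a solution of the continuity equation with integrable flux
density `w`, if `∫ β(u_a) dπ < ∞` and the positive part of
`B_β(u_t(x),u_t(y),w♭_t(x,y))` is `dt⊗θ`-integrable, then `B_β(u,u,w♭)` is
`dt⊗θ`-integrable, `t ↦ ∫ β(u_t) dπ` is absolutely continuous, and
`∫β(u_t)dπ − ∫β(u_s)dπ = ½∫_s^t ∬ B_β dθ dr`. -/
theorem chain_rule_I
    {V : Type*} [MeasurableSpace V]
    (π : Measure V) [IsFiniteMeasure π]
    (κ : Kernel V V) [IsFiniteKernel κ]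
    (hdb : (π ⊗ₘ κ).map Prod.swap = π ⊗ₘ κ)
    (β β' : ℝ → ℝ) (β'0 : EReal) (hβ'0top : β'0 ≠ ⊤)
    (hβcont : ContinuousOn β (Ici 0))
    (hβconv : ConvexOn ℝ (Ici 0) β)
    (hβnonneg : ∀ r : ℝ, 0 ≤ r → 0 ≤ β r)
    (hβderiv : ∀ r : ℝ, 0 < r → HasDerivAt β (β' r) r)
    (hβ'cont : ContinuousOn β' (Ioi 0))
    (hβ'lim : Tendsto (fun r : ℝ => (β' r : EReal)) (nhdsWithin 0 (Ioi 0))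
      (nhds β'0))
    (a b : ℝ) (hab : a ≤ b)
    (u : ℝ → V → ℝ)
    (humeas : Measurable fun p : ℝ × V => u p.1 p.2)
    (hunonneg : ∀ t ∈ Icc a b, ∀ x : V, 0 ≤ u t x)
    (huint : ∀ t ∈ Icc a b, Integrable (u t) π)
    (w : ℝ → V → V → ℝ)
    (hwmeas : Measurable fun p : ℝ × V × V => w p.1 p.2.1 p.2.2)
    (hwint : ∫⁻ t in Icc a b,
      ∫⁻ p : V × V, ENNReal.ofReal |w t p.1 p.2| ∂(π ⊗ₘ κ) < ⊤)
    (hce : ∀ᵐ x ∂π, ∀ t ∈ Icc a b,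
      u t x = u a x + ∫ s in Icc a t, ∫ y, (w s y x - w s x y) / 2 ∂(κ x))
    (hβua : Integrable (fun x => β (u a x)) π)
    (hBpos : ∫⁻ t in Icc a b, ∫⁻ p : V × V,
        erealPos (Bbeta β' β'0 (u t p.1) (u t p.2)
          ((w t p.1 p.2 - w t p.2 p.1) / 2)) ∂(π ⊗ₘ κ) < ⊤) :
    (∫⁻ t in Icc a b, ∫⁻ p : V × V,
        erealAbs (Bbeta β' β'0 (u t p.1) (u t p.2)
          ((w t p.1 p.2 - w t p.2 p.1) / 2)) ∂(π ⊗ₘ κ) < ⊤) ∧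
    IntegrableOn (fun t => ∫ p : V × V,
        (Bbeta β' β'0 (u t p.1) (u t p.2)
          ((w t p.1 p.2 - w t p.2 p.1) / 2)).toReal ∂(π ⊗ₘ κ)) (Icc a b) ∧
    (∀ s ∈ Icc a b, ∀ t ∈ Icc a b, s ≤ t →
      (∫ x, β (u t x) ∂π) - (∫ x, β (u s x) ∂π)
        = (1 / 2) * ∫ r in Icc s t, ∫ p : V × V,
            (Bbeta β' β'0 (u r p.1) (u r p.2)
              ((w r p.1 p.2 - w r p.2 p.1) / 2)).toReal ∂(π ⊗ₘ κ)) := by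
  exact chain_rule_I_general π κ hdb β β' β'0 hβcont hβconv hβderiv hβ'cont hβ'lim a b hab u
    humeas hunonneg huint w hwmeas hwint hce hβua hBpos
end

section
/- Let V be a measurable space such that the projections and the swap map s(x,y) := (y,x) on V×V are measurable, and let j be a finite signed measure on V×V. Set k := j − s_#j (where s_#j denotes the pushforward of j under s), and let k = k⁺ − k⁻ be the Jordan decomposition of k into its positive and negative parts. Then k⁻ = s_#(k⁺), and the graph divergence is unchanged when j is replaced by k⁺: x_#(k⁺) − y_#(k⁺) = x_#j − y_#j as signed measures on V, where x and y denote the first and second coordinate projections from V×V to V. -/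
open MeasureTheory

/-!
Pushing `k = j - σ_#j` forward under an involution `σ` changes its sign. Since an isomorphism
carries Jordan decompositions to Jordan decompositions, uniqueness forces `σ_#k⁺ = k⁻`, that is
`k⁺ - σ_#k⁺ = k = j - σ_#j`. For every `p` the difference `p_#m - (p ∘ σ)_#m` is the pushforward
under `p` of `m - σ_#m`, so it takes the same value at `m = k⁺` and at `m = j`. The graph
divergence is the case `σ = swap`, `p = fst`.
-/

section Pushforward

variable {α β γ : Type*} [MeasurableSpace α] [MeasurableSpace β] [MeasurableSpace γ]

section VectorMeasure

variable {M : Type*} [TopologicalSpace M]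

theorem vectorMeasure_map_map [AddCommMonoid M] (v : VectorMeasure α M) {f : α → β} {g : β → γ}
    (hf : Measurable f) (hg : Measurable g) : (v.map f).map g = v.map (g ∘ f) := by
  ext s hs
  rw [VectorMeasure.map_apply _ hg hs, VectorMeasure.map_apply _ hf (hg hs),
    VectorMeasure.map_apply _ (hg.comp hf) hs, Set.preimage_comp]

variable [AddCommGroup M] [IsTopologicalAddGroup M]

theorem vectorMeasure_map_sub (v w : VectorMeasure α M) (f : α → β) :
    (v - w).map f = v.map f - w.map f :=
  map_sub (VectorMeasure.mapGm f) v w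

theorem vectorMeasure_map_sub_map_comp (v : VectorMeasure α M) {σ : α → α} {p : α → β}
    (hσ : Measurable σ) (hp : Measurable p) :
    v.map p - v.map (p ∘ σ) = (v - v.map σ).map p := by
  rw [vectorMeasure_map_sub, vectorMeasure_map_map v hσ hp]

theorem vectorMeasure_map_sub_map_of_involutive (v : VectorMeasure α M) {σ : α → α}
    (hσ : Measurable σ) (hinv : Function.Involutive σ) :
    (v - v.map σ).map σ = -(v - v.map σ) := by
  rw [vectorMeasure_map_sub, vectorMeasure_map_map v hσ hσ, hinv.comp_self,
    VectorMeasure.map_id, neg_sub]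

end VectorMeasure

theorem measure_map_toSignedMeasure (μ : Measure α) [IsFiniteMeasure μ] {f : α → β}
    (hf : Measurable f) : (μ.map f).toSignedMeasure = μ.toSignedMeasure.map f := by
  ext s hs
  rw [VectorMeasure.map_apply _ hf hs, Measure.toSignedMeasure_apply_measurable hs,
    Measure.toSignedMeasure_apply_measurable (hf hs), map_measureReal_apply hf hs]

/-- The pushforward of a Jordan decomposition, taken on the positive and negative parts
separately. The map is required to be a measurable embedding so that the two image measures
remain mutually singular. -/
noncomputable def jordanDecompositionMap (J : JordanDecomposition α) {f : α → β}
    (hf : MeasurableEmbedding f) : JordanDecomposition β where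
  posPart := J.posPart.map f
  negPart := J.negPart.map f
  mutuallySingular := hf.mutuallySingular_map J.mutuallySingular

theorem jordanDecompositionMap_toSignedMeasure (J : JordanDecomposition α) {f : α → β}
    (hf : MeasurableEmbedding f) :
    (jordanDecompositionMap J hf).toSignedMeasure = J.toSignedMeasure.map f := by
  simp only [JordanDecomposition.toSignedMeasure, jordanDecompositionMap,
    measure_map_toSignedMeasure _ hf.measurable, vectorMeasure_map_sub]

theorem signedMeasure_map_toJordanDecomposition (s : SignedMeasure α) {f : α → β}
    (hf : MeasurableEmbedding f) :
    SignedMeasure.toJordanDecomposition (s.map f) =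
      jordanDecompositionMap s.toJordanDecomposition hf := by
  apply SignedMeasure.toJordanDecomposition_eq
  rw [jordanDecompositionMap_toSignedMeasure, s.toSignedMeasure_toJordanDecomposition]

theorem signedMeasure_negPart_eq_map_posPart_of_map_eq_neg {s : SignedMeasure α} {f : α → α}
    (hf : MeasurableEmbedding f) (hs : s.map f = -s) :
    s.toJordanDecomposition.negPart = s.toJordanDecomposition.posPart.map f := by
  have hJ : -s.toJordanDecomposition = jordanDecompositionMap s.toJordanDecomposition hf := by
    rw [← SignedMeasure.toJordanDecomposition_neg, ← hs,
      signedMeasure_map_toJordanDecomposition s hf]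
  exact congrArg JordanDecomposition.posPart hJ

theorem skew_symmetrization_divergence_general (j : SignedMeasure α) {σ : α → α} {p : α → β}
    (hσ : Measurable σ) (hinv : Function.Involutive σ) (hp : Measurable p) :
    ((j - j.map σ).toJordanDecomposition.negPart
        = (j - j.map σ).toJordanDecomposition.posPart.map σ) ∧
    ((j - j.map σ).toJordanDecomposition.posPart.toSignedMeasure.map p
        - (j - j.map σ).toJordanDecomposition.posPart.toSignedMeasure.map (p ∘ σ)
      = j.map p - j.map (p ∘ σ)) := by
  set k := j - j.map σ
  set J := k.toJordanDecomposition
  have negPart_eq : J.negPart = J.posPart.map σ :=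
    signedMeasure_negPart_eq_map_posPart_of_map_eq_neg
      (MeasurableEquiv.ofInvolutive σ hinv hσ).measurableEmbedding
      (vectorMeasure_map_sub_map_of_involutive j hσ hinv)
  have posPart_sub_map :
      J.posPart.toSignedMeasure - J.posPart.toSignedMeasure.map σ = k := by
    rw [← measure_map_toSignedMeasure _ hσ, ← Measure.toSignedMeasure_congr negPart_eq]
    exact k.toSignedMeasure_toJordanDecomposition
  refine ⟨negPart_eq, ?_⟩
  rw [vectorMeasure_map_sub_map_comp _ hσ hp, posPart_sub_map,
    vectorMeasure_map_sub_map_comp _ hσ hp]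

end Pushforward

/-- Skew-symmetrization of a flux: for a finite signed measure `j` on `V×V`, setting
`k = j − s_#j` (with `s` the swap map) and taking the Jordan decomposition
`k = k⁺ − k⁻`, the negative part is the swap-pushforward of the positive part,
`k⁻ = s_#(k⁺)`, and the graph divergence is unchanged when `j` is replaced by `k⁺`:
`x_#(k⁺) − y_#(k⁺) = x_#j − y_#j`. -/
theorem skew_symmetrization_divergence
    {V : Type*} [MeasurableSpace V]
    (j : SignedMeasure (V × V)) :
    ((j - j.map Prod.swap).toJordanDecomposition.negPart
        = Measure.map Prod.swap
            (j - j.map Prod.swap).toJordanDecomposition.posPart) ∧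
    ((j - j.map Prod.swap).toJordanDecomposition.posPart.toSignedMeasure.map
          Prod.fst
        - (j - j.map Prod.swap).toJordanDecomposition.posPart.toSignedMeasure.map
          Prod.snd
      = j.map Prod.fst - j.map Prod.snd) :=
  skew_symmetrization_divergence_general j measurable_swap Prod.swap_swap measurable_fst
end
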